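/- arXiv:1501.01549 — 2 statements merged into one kernel-verified Lean document; each statement's English description precedes it below -/
import Mathlib

section
/- If a probability mass function Pon a finite set 𝒳×𝒴 admits an embedding ψ (with arbitrary finite-dimensional working registers A', B') with zero leakage, i.e. S(X;BB')_ψ = I(X;Y), then P is trivial: H(X↘Y | Y) = 0. Equivalently, every embedding of a non-trivial primitive leaks information. -/
open scoped BigOperators
open Matrix
open scoped ComplexOrder

attribute [local instance 10] Classical.propDecidable

noncomputable section

/-- Base-2 Shannon entropy of a finitely supported real function. -/
def shannonEntropy {α : Type*} [Fintype α] (p : α → ℝ) : ℝ :=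
  -∑ x, p x * Real.logb 2 (p x)

/-- Von Neumann entropy: base-2 Shannon entropy of the eigenvalue multiset. -/
def vonNeumannEntropy {n : Type*} [Fintype n] [DecidableEq n] (ρ : Matrix n n ℂ) : ℝ :=
  if h : ρ.IsHermitian then shannonEntropy h.eigenvalues else 0

/-- Rank-one outer product `|φ⟩⟨φ|`. -/
def outer {n : Type*} (φ : n → ℂ) : Matrix n n ℂ :=
  fun i j => φ i * (starRingEnd ℂ) (φ j)

/-- Partial trace over the first tensor factor. -/
def trLeft {m n : Type*} [Fintype m] (ρ : Matrix (m × n) (m × n) ℂ) : Matrix n n ℂ :=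
  fun i j => ∑ a, ρ (a, i) (a, j)

/-- Partial trace over the second tensor factor. -/
def trRight {m n : Type*} [Fintype n] (ρ : Matrix (m × n) (m × n) ℂ) : Matrix m m ℂ :=
  fun i j => ∑ b, ρ (i, b) (j, b)

variable {𝒳 𝒴 : Type*} [Fintype 𝒳] [Fintype 𝒴] [DecidableEq 𝒳] [DecidableEq 𝒴]

def margX (P : 𝒳 × 𝒴 → ℝ) (x : 𝒳) : ℝ := ∑ y, P (x, y)

def margY (P : 𝒳 × 𝒴 → ℝ) (y : 𝒴) : ℝ := ∑ x, P (x, y)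

/-- Classical base-2 mutual information `I(X;Y) = H(X) + H(Y) − H(X,Y)`. -/
def mutualInfo (P : 𝒳 × 𝒴 → ℝ) : ℝ :=
  shannonEntropy (margX P) + shannonEntropy (margY P) - shannonEntropy P

/-- `f_X(x) = P_{Y|X=x}`, the dependent-part map of `X` w.r.t. `Y`. -/
def condYX (P : 𝒳 × 𝒴 → ℝ) (x : 𝒳) : 𝒴 → ℝ := fun y => P (x, y) / margX P x

/-- `H(X↘Y | Y)`: the conditional Shannon entropy of the dependent part
`X↘Y = f_X(X)` given `Y`. -/
def depCondEntropyX (P : 𝒳 × 𝒴 → ℝ) : ℝ :=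
  -∑ p : 𝒳 × 𝒴, P p *
    Real.logb 2
      ((∑ x' ∈ Finset.univ.filter fun x' => condYX P x' = condYX P p.1, P (x', p.2)) /
        margY P p.2)

section embedding

variable {dA dB : ℕ}

/-- Block `x` of the cq-state `ρ_{XBB'}` (working register `A'` traced out) of the
embedding `|ψ⟩ = Σ_{x,y} √P(x,y) |x⟩|y⟩|φ^{x,y}⟩_{A'B'}`. -/
def blockX (P : 𝒳 × 𝒴 → ℝ) (φ : 𝒳 → 𝒴 → Fin dA × Fin dB → ℂ) (x : 𝒳) :
    Matrix (𝒴 × Fin dB) (𝒴 × Fin dB) ℂ := fun p q =>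
  ∑ a : Fin dA,
    ((Real.sqrt (P (x, p.1)) : ℂ) * φ x p.1 (a, p.2)) *
      (starRingEnd ℂ) ((Real.sqrt (P (x, q.1)) : ℂ) * φ x q.1 (a, q.2))

/-- `S(X;BB')_ψ = H(X) + S(ρ_{BB'}) − S(ρ_{XBB'})`. -/
def SXBB (P : 𝒳 × 𝒴 → ℝ) (φ : 𝒳 → 𝒴 → Fin dA × Fin dB → ℂ) : ℝ :=
  shannonEntropy (margX P) + vonNeumannEntropy (∑ x, blockX P φ x) -
    vonNeumannEntropy (Matrix.blockDiagonal (blockX P φ))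

end embedding

/-! Let `σ x` be the blocks of the cq-state and `ρ = ∑ x, σ x`. Zero leakage says that
`∑ x, D(σ x ‖ ρ)` equals the corresponding classical divergence, which it always dominates; hence
equality holds for every `x`. Up to normalization, `a log (a / b)` is an integral over `t ∈ (0, 1)`
of `χ²`-terms `a² / ((1 - t) b + t a)`. The quantum `χ²`-term is the maximum over all matrices `Z`
of `Re tr Zᴴ (2 σ x - (1 - t) ρ Z - t Z σ x)`, and the classical one is the maximum over diagonal
`Z`, so equality of the divergences makes the diagonal maximizer solve
`(1 - t) ρ Z + t Z σ x = σ x` for every `t`. This gives `σ x = ρ · diag (P_{X|Y}(x|y))` and, taking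
adjoints, `σ x = diag (P_{X|Y}(x|y)) · ρ`. If `y` and `y'` have positive probability together with
a common symbol of `X`, correctness for the holder of `X` keeps the `(y, y')` block of `ρ` nonzero,
so `P_{X|Y=y} = P_{X|Y=y'}`. Hence two symbols of `X` compatible with the same `y` have
proportional rows in `P`, so the dependent part of `X` is a function of `Y`. -/

section SkewedDivergence

/-- The point at time `t` on the segment from `b` to `a`. -/
def mix (t a b : ℝ) : ℝ := (1 - t) * b + t * a

/-- The summand of the `χ²`-divergence skewed by `t`, the analogue for the reference value
`mix t a b` of the usual `a ^ 2 / b`. It is read as `0` when `mix t a b = 0`. -/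
def skewChi (t a b : ℝ) : ℝ := a ^ 2 / mix t a b

lemma mix_nonneg {t a b : ℝ} (ht : t ∈ Set.Icc 0 1) (ha : 0 ≤ a) (hb : 0 ≤ b) :
    0 ≤ mix t a b :=
  add_nonneg (mul_nonneg (sub_nonneg.2 ht.2) hb) (mul_nonneg ht.1 ha)

lemma mix_ne_zero_of_ne_zero_right {t a b : ℝ} (ht : t ∈ Set.Ico 0 1) (ha : 0 ≤ a) (hb : 0 ≤ b)
    (hb0 : b ≠ 0) : mix t a b ≠ 0 :=
  (add_pos_of_pos_of_nonneg (mul_pos (sub_pos.2 ht.2) (hb.lt_of_ne' hb0))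
    (mul_nonneg ht.1 ha)).ne'

lemma mix_ne_zero_of_ne_zero_left {t a b : ℝ} (ht : t ∈ Set.Ioc 0 1) (ha : 0 ≤ a) (hb : 0 ≤ b)
    (ha0 : a ≠ 0) : mix t a b ≠ 0 :=
  (add_pos_of_nonneg_of_pos (mul_nonneg (sub_nonneg.2 ht.2) hb)
    (mul_pos ht.1 (ha.lt_of_ne' ha0))).ne'

lemma mix_one_ne_zero {t r : ℝ} (ht : t ∈ Set.Ioo 0 1) (hr : 0 ≤ r) : mix t r 1 ≠ 0 :=
  mix_ne_zero_of_ne_zero_right (Set.Ioo_subset_Ico_self ht) hr zero_le_one one_ne_zero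

lemma continuousOn_mul_log_mix {a b : ℝ} (ha : 0 ≤ a) (hb : 0 ≤ b) (hab : b = 0 → a = 0) :
    ContinuousOn (fun t => a * Real.log (mix t a b)) (Set.Icc 0 1) := by
  rcases eq_or_ne a 0 with rfl | ha0
  · simpa using continuousOn_const
  refine continuousOn_const.mul (ContinuousOn.log (by unfold mix; fun_prop) fun t ht => ?_)
  rcases ht.1.eq_or_lt with rfl | h0
  · exact mix_ne_zero_of_ne_zero_right (by simp) ha hb (mt hab ha0)
  · exact mix_ne_zero_of_ne_zero_left ⟨h0, ht.2⟩ ha hb ha0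

lemma hasDerivAt_mul_log_mix {t a b : ℝ} (ht : t ∈ Set.Ioo 0 1) (ha : 0 ≤ a) (hb : 0 ≤ b) :
    HasDerivAt (fun u => a * Real.log (mix u a b)) ((skewChi t a b - a) / (1 - t)) t := by
  rcases eq_or_ne a 0 with rfl | ha0
  · simpa [skewChi] using hasDerivAt_const t (0 : ℝ)
  have hmix : mix t a b ≠ 0 := mix_ne_zero_of_ne_zero_left ⟨ht.1, ht.2.le⟩ ha hb ha0
  have ht1 : 1 - t ≠ 0 := (sub_pos.2 ht.2).ne'
  have hderiv : HasDerivAt (fun u => mix u a b) (a - b) t :=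
    ((((hasDerivAt_id' t).const_sub 1).mul_const b).fun_add
      ((hasDerivAt_id' t).mul_const a)).congr_deriv (by ring)
  refine ((hderiv.log hmix).const_mul a).congr_deriv ?_
  rw [skewChi]
  field_simp
  rw [mix]
  ring

/-- Two nonnegative families such that, on the support of the weight `w`, the first is absolutely
continuous with respect to the second. -/
structure IsAbsContFamily {ι : Type*} (w a b : ι → ℝ) : Prop where
  left_nonneg : ∀ i, 0 ≤ a i
  right_nonneg : ∀ i, 0 ≤ b i
  left_eq_zero : ∀ i, w i ≠ 0 → b i = 0 → a i = 0

lemma isAbsContFamily_one {ι : Type*} (w : ι → ℝ) {a : ι → ℝ} (ha : ∀ i, 0 ≤ a i) :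
    IsAbsContFamily w a fun _ => 1 :=
  ⟨ha, fun _ => zero_le_one, fun _ _ h => absurd h one_ne_zero⟩

variable {ι κ : Type*} [Fintype ι] [Fintype κ]

/-- A path from `∑ w a log b` at `t = 0` to `∑ w a log a` at `t = 1`, whose derivative is a skewed
`χ²`-divergence up to normalization. -/
def logPath (w a b : ι → ℝ) (t : ℝ) : ℝ := ∑ i, w i * (a i * Real.log (mix t (a i) (b i)))

lemma logPath_one_sub_logPath_zero (w a b : ι → ℝ) :
    logPath w a b 1 - logPath w a b 0 =
      ∑ i, w i * (a i * (Real.log (a i) - Real.log (b i))) := by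
  simp only [logPath, mix, ← Finset.sum_sub_distrib]
  exact Finset.sum_congr rfl fun i _ => by ring_nf

lemma IsAbsContFamily.continuousOn_logPath {w a b : ι → ℝ} (h : IsAbsContFamily w a b) :
    ContinuousOn (logPath w a b) (Set.Icc 0 1) := by
  refine continuousOn_finsetSum _ fun i _ => ?_
  rcases eq_or_ne (w i) 0 with hw | hw
  · simpa [hw] using continuousOn_const
  · exact continuousOn_const.mul
      (continuousOn_mul_log_mix (h.left_nonneg i) (h.right_nonneg i) (h.left_eq_zero i hw))

lemma IsAbsContFamily.hasDerivAt_logPath {w a b : ι → ℝ} (h : IsAbsContFamily w a b)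
    {t : ℝ} (ht : t ∈ Set.Ioo 0 1) :
    HasDerivAt (logPath w a b)
      ((∑ i, w i * skewChi t (a i) (b i) - ∑ i, w i * a i) / (1 - t)) t := by
  refine (HasDerivAt.fun_sum fun i _ =>
    (hasDerivAt_mul_log_mix ht (h.left_nonneg i) (h.right_nonneg i)).const_mul (w i)).congr_deriv ?_
  rw [← Finset.sum_sub_distrib, Finset.sum_div]
  exact Finset.sum_congr rfl fun i _ => by ring

lemma deriv_eq_zero_of_monotoneOn_of_eq {f : ℝ → ℝ} {a b t : ℝ}
    (hf : MonotoneOn f (Set.Icc a b)) (hab : f a = f b) (ht : t ∈ Set.Ioo a b) :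
    deriv f t = 0 := by
  have hle : a ≤ b := (ht.1.trans ht.2).le
  have hconst : f =ᶠ[nhds t] fun _ => f a := by
    filter_upwards [Icc_mem_nhds ht.1 ht.2] with u hu
    exact le_antisymm (hab ▸ hf hu (Set.right_mem_Icc.2 hle) hu.2)
      (hf (Set.left_mem_Icc.2 hle) hu hu.1)
  rw [hconst.deriv_eq, deriv_const]

section Comparison

variable {w a b : ι → ℝ} {w' a' b' : κ → ℝ}

lemma hasDerivAt_logPath_sub_logPath (h : IsAbsContFamily w a b)
    (h' : IsAbsContFamily w' a' b') (hmass : ∑ i, w i * a i = ∑ i, w' i * a' i)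
    {t : ℝ} (ht : t ∈ Set.Ioo 0 1) :
    HasDerivAt (fun u => logPath w a b u - logPath w' a' b' u)
      ((∑ i, w i * skewChi t (a i) (b i) - ∑ i, w' i * skewChi t (a' i) (b' i)) / (1 - t)) t :=
  ((h.hasDerivAt_logPath ht).fun_sub (h'.hasDerivAt_logPath ht)).congr_deriv (by
    rw [hmass]; ring)

lemma monotoneOn_logPath_sub_logPath (h : IsAbsContFamily w a b)
    (h' : IsAbsContFamily w' a' b') (hmass : ∑ i, w i * a i = ∑ i, w' i * a' i)
    (hchi : ∀ t ∈ Set.Ioo (0 : ℝ) 1,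
      ∑ i, w' i * skewChi t (a' i) (b' i) ≤ ∑ i, w i * skewChi t (a i) (b i)) :
    MonotoneOn (fun t => logPath w a b t - logPath w' a' b' t) (Set.Icc 0 1) := by
  refine monotoneOn_of_deriv_nonneg (convex_Icc 0 1)
    (h.continuousOn_logPath.sub h'.continuousOn_logPath) ?_ ?_ <;> rw [interior_Icc]
  · exact fun t ht => (hasDerivAt_logPath_sub_logPath h h' hmass
      ht).differentiableAt.differentiableWithinAt
  · intro t ht
    rw [(hasDerivAt_logPath_sub_logPath h h' hmass ht).deriv]
    exact div_nonneg (sub_nonneg.2 (hchi t ht)) (sub_nonneg.2 ht.2.le)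

theorem sum_mul_log_sub_log_le_of_skewChi_le (h : IsAbsContFamily w a b)
    (h' : IsAbsContFamily w' a' b') (hmass : ∑ i, w i * a i = ∑ i, w' i * a' i)
    (hchi : ∀ t ∈ Set.Ioo (0 : ℝ) 1,
      ∑ i, w' i * skewChi t (a' i) (b' i) ≤ ∑ i, w i * skewChi t (a i) (b i)) :
    ∑ i, w' i * (a' i * (Real.log (a' i) - Real.log (b' i))) ≤
      ∑ i, w i * (a i * (Real.log (a i) - Real.log (b i))) := by
  have hmono := monotoneOn_logPath_sub_logPath h h' hmass hchi
    (Set.left_mem_Icc.2 zero_le_one) (Set.right_mem_Icc.2 zero_le_one) zero_le_one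
  rw [← logPath_one_sub_logPath_zero, ← logPath_one_sub_logPath_zero]
  linarith

theorem sum_skewChi_eq_of_sum_mul_log_sub_log_eq (h : IsAbsContFamily w a b)
    (h' : IsAbsContFamily w' a' b') (hmass : ∑ i, w i * a i = ∑ i, w' i * a' i)
    (hchi : ∀ t ∈ Set.Ioo (0 : ℝ) 1,
      ∑ i, w' i * skewChi t (a' i) (b' i) ≤ ∑ i, w i * skewChi t (a i) (b i))
    (heq : ∑ i, w' i * (a' i * (Real.log (a' i) - Real.log (b' i))) =
      ∑ i, w i * (a i * (Real.log (a i) - Real.log (b i))))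
    {t : ℝ} (ht : t ∈ Set.Ioo 0 1) :
    ∑ i, w' i * skewChi t (a' i) (b' i) = ∑ i, w i * skewChi t (a i) (b i) := by
  rw [← logPath_one_sub_logPath_zero, ← logPath_one_sub_logPath_zero] at heq
  have hderiv := deriv_eq_zero_of_monotoneOn_of_eq
    (monotoneOn_logPath_sub_logPath h h' hmass hchi) (by linarith) ht
  rw [(hasDerivAt_logPath_sub_logPath h h' hmass ht).deriv,
    div_eq_zero_iff, or_iff_left (sub_pos.2 ht.2).ne'] at hderiv
  exact (sub_eq_zero.1 hderiv).symm

end Comparison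

end SkewedDivergence

section RelativeEntropy

variable {n : Type*} [Fintype n] [DecidableEq n] {α β : Matrix n n ℂ}

lemma cfc_apply_eigenvectorUnitary (hα : α.IsHermitian) (f : ℝ → ℝ) :
    cfc f α * (hα.eigenvectorUnitary : Matrix n n ℂ) =
      hα.eigenvectorUnitary * diagonal fun i => (f (hα.eigenvalues i) : ℂ) := by
  rw [hα.cfc_eq, IsHermitian.cfc, Unitary.conjStarAlgAut_apply, mul_assoc,
    Unitary.coe_star_mul_self, mul_one]
  rfl

/-- The matrix of `Z` with respect to the eigenbases of `α` (columns) and `β` (rows). -/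
def eigenCoords (hβ : β.IsHermitian) (hα : α.IsHermitian) (Z : Matrix n n ℂ) : Matrix n n ℂ :=
  star (hβ.eigenvectorUnitary : Matrix n n ℂ) * Z * (hα.eigenvectorUnitary : Matrix n n ℂ)

variable (hβ : β.IsHermitian) (hα : α.IsHermitian)

lemma eigenCoords_mul_cfc (f : ℝ → ℝ) (Z : Matrix n n ℂ) (k j : n) :
    eigenCoords hβ hα (Z * cfc f α) k j = f (hα.eigenvalues j) * eigenCoords hβ hα Z k j := by
  rw [eigenCoords, mul_assoc, mul_assoc, cfc_apply_eigenvectorUnitary hα, ← mul_assoc, ← mul_assoc,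
    mul_diagonal, mul_comm, eigenCoords]

lemma conjTranspose_eigenCoords (Z : Matrix n n ℂ) :
    (eigenCoords hβ hα Z)ᴴ = eigenCoords hα hβ Zᴴ := by
  simp [eigenCoords, star_eq_conjTranspose, mul_assoc]

lemma eigenCoords_cfc_mul (f : ℝ → ℝ) (Z : Matrix n n ℂ) (k j : n) :
    eigenCoords hβ hα (cfc f β * Z) k j = f (hβ.eigenvalues k) * eigenCoords hβ hα Z k j := by
  have hcfc : (cfc f β)ᴴ = cfc f β := IsSelfAdjoint.cfc
  rw [← conjTranspose_conjTranspose (eigenCoords hβ hα _), conjTranspose_eigenCoords,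
    conjTranspose_mul, hcfc, conjTranspose_apply, eigenCoords_mul_cfc,
    ← conjTranspose_eigenCoords hβ]
  simp

lemma eigenCoords_mul_right (Z : Matrix n n ℂ) (k j : n) :
    eigenCoords hβ hα (Z * α) k j = hα.eigenvalues j * eigenCoords hβ hα Z k j := by
  have h := eigenCoords_mul_cfc hβ hα id Z k j
  rwa [cfc_id ℝ α hα.isSelfAdjoint] at h

lemma eigenCoords_mul_left (Z : Matrix n n ℂ) (k j : n) :
    eigenCoords hβ hα (β * Z) k j = hβ.eigenvalues k * eigenCoords hβ hα Z k j := by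
  have h := eigenCoords_cfc_mul hβ hα id Z k j
  rwa [cfc_id ℝ β hβ.isSelfAdjoint] at h

lemma eigenCoords_self (k j : n) :
    eigenCoords hβ hα α k j = hα.eigenvalues j * eigenCoords hβ hα 1 k j := by
  rw [← eigenCoords_mul_right, one_mul]

lemma eigenCoords_injective : Function.Injective (eigenCoords hβ hα) := fun Y Z h => by
  have hcancel (W : Matrix n n ℂ) : (hβ.eigenvectorUnitary : Matrix n n ℂ) *
      eigenCoords hβ hα W * star (hα.eigenvectorUnitary : Matrix n n ℂ) = W := by
    simp [eigenCoords, ← mul_assoc, mul_assoc W]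
  rw [← hcancel Y, h, hcancel Z]

lemma eigenCoords_add (Y Z : Matrix n n ℂ) :
    eigenCoords hβ hα (Y + Z) = eigenCoords hβ hα Y + eigenCoords hβ hα Z := by
  simp [eigenCoords, mul_add, add_mul]

lemma eigenCoords_smul (c : ℝ) (Z : Matrix n n ℂ) :
    eigenCoords hβ hα (c • Z) = c • eigenCoords hβ hα Z := by
  simp [eigenCoords]

lemma eigenCoords_sub (Y Z : Matrix n n ℂ) :
    eigenCoords hβ hα (Y - Z) = eigenCoords hβ hα Y - eigenCoords hβ hα Z := by
  simp [eigenCoords, mul_sub, sub_mul]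

lemma sum_star_eigenCoords_mul (Y Z : Matrix n n ℂ) :
    ∑ p : n × n, star (eigenCoords hβ hα Y p.1 p.2) * eigenCoords hβ hα Z p.1 p.2 =
      (Yᴴ * Z).trace := by
  have hprod : (eigenCoords hβ hα Y)ᴴ * eigenCoords hβ hα Z =
      star (hα.eigenvectorUnitary : Matrix n n ℂ) * (Yᴴ * Z) * hα.eigenvectorUnitary := by
    rw [conjTranspose_eigenCoords]
    simp [eigenCoords, mul_assoc, ← mul_assoc (hβ.eigenvectorUnitary : Matrix n n ℂ)]
  calc _ = ((eigenCoords hβ hα Y)ᴴ * eigenCoords hβ hα Z).trace := by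
        simp only [Fintype.sum_prod_type_right, trace, diag_apply, mul_apply, conjTranspose_apply]
    _ = (Yᴴ * Z).trace := by
        rw [hprod, trace_mul_comm, ← mul_assoc]
        simp

lemma sum_normSq_eigenCoords_one_mul (f g : ℝ → ℝ) :
    ∑ p : n × n, ‖eigenCoords hβ hα 1 p.1 p.2‖ ^ 2 *
        (g (hβ.eigenvalues p.1) * f (hα.eigenvalues p.2)) = (cfc g β * cfc f α).trace.re := by
  have h := sum_star_eigenCoords_mul hβ hα 1 (cfc g β * (1 * cfc f α))
  rw [conjTranspose_one, one_mul, one_mul] at h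
  rw [← h, Complex.re_sum]
  refine Finset.sum_congr rfl fun p _ => ?_
  rw [← one_mul (cfc f α), eigenCoords_cfc_mul, eigenCoords_mul_cfc,
    ← Complex.ofReal_re (_ ^ 2 * _)]
  congr 1
  push_cast
  rw [← Complex.conj_mul', starRingEnd_apply]
  ring

lemma eigenCoords_apply_of_ker (hker : ∀ v, β *ᵥ v = 0 → α *ᵥ v = 0) {k : n}
    (hk : hβ.eigenvalues k = 0) (j : n) : eigenCoords hβ hα α k j = 0 := by
  have hcol : α *ᵥ (hβ.eigenvectorUnitary : Matrix n n ℂ).col k = 0 := by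
    rw [hβ.eigenvectorUnitary_col_eq]
    exact hker _ (by rw [hβ.mulVec_eigenvectorBasis, hk, zero_smul])
  have hcoords : (eigenCoords hα hβ α).col k = 0 := by
    rw [← mulVec_single_one, eigenCoords, mul_assoc, ← mulVec_mulVec, ← mulVec_mulVec,
      mulVec_single_one, hcol, mulVec_zero]
  have hadj : (eigenCoords hα hβ α)ᴴ = eigenCoords hβ hα α := by
    rw [conjTranspose_eigenCoords, hα.eq]
  rw [← hadj, conjTranspose_apply, ← col_apply (eigenCoords hα hβ α) k j, hcoords, Pi.zero_apply,
    star_zero]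

lemma mix_mul_normSq_sub {t r s : ℝ} (h : mix t r s = 0 → r = 0) (y m : ℂ) :
    mix t r s * ‖y - (r / mix t r s : ℝ) * m‖ ^ 2 =
      ‖m‖ ^ 2 * skewChi t r s - (star y * (2 * (r * m) - mix t r s * y)).re := by
  rcases eq_or_ne (mix t r s) 0 with hd | hd
  · obtain rfl := h hd
    simp [skewChi, hd]
  · simp only [Complex.sq_norm, Complex.normSq_apply, skewChi, Complex.sub_re, Complex.sub_im,
      Complex.mul_re, Complex.mul_im, Complex.ofReal_re, Complex.ofReal_im, Complex.star_def,
      Complex.conj_re, Complex.conj_im, Complex.re_ofNat, Complex.im_ofNat]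
    field_simp
    ring

/-- The noncommutative analogue of multiplication by `mix t a b`: `β` acts on the left and `α` on
the right, so that the two actions commute and are diagonal in `eigenCoords`. -/
def mixMul {n : Type*} [Fintype n] (t : ℝ) (α β Z : Matrix n n ℂ) : Matrix n n ℂ :=
  (1 - t) • (β * Z) + t • (Z * α)

lemma eigenCoords_mixMul (t : ℝ) (Z : Matrix n n ℂ) (k j : n) :
    eigenCoords hβ hα (mixMul t α β Z) k j =
      mix t (hα.eigenvalues j) (hβ.eigenvalues k) * eigenCoords hβ hα Z k j := by
  rw [mixMul, eigenCoords_add, eigenCoords_smul, eigenCoords_smul, Matrix.add_apply,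
    Matrix.smul_apply, Matrix.smul_apply, eigenCoords_mul_left, eigenCoords_mul_right, mix,
    Complex.real_smul, Complex.real_smul]
  push_cast
  ring

/-- The quantum counterpart of `∑ i, skewChi t (a i) (b i)`, namely `tr (α * Z)` for a solution
`Z` of `mixMul t α β Z = α`, written out in the eigenbases of `α` and `β`. -/
def quantumSkewChi (t : ℝ) : ℝ :=
  ∑ p : n × n, ‖eigenCoords hβ hα 1 p.1 p.2‖ ^ 2 *
    skewChi t (hα.eigenvalues p.2) (hβ.eigenvalues p.1)

section PosSemidef

variable (hβ : β.PosSemidef) (hα : α.PosSemidef) {t : ℝ}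

lemma mix_eigenvalues_nonneg (ht : t ∈ Set.Ioo 0 1) (k j : n) :
    0 ≤ mix t (hα.1.eigenvalues j) (hβ.1.eigenvalues k) :=
  mix_nonneg (Set.Ioo_subset_Icc_self ht) (hα.eigenvalues_nonneg j) (hβ.eigenvalues_nonneg k)

lemma eigenvalues_eq_zero_of_mix_eq_zero (ht : t ∈ Set.Ioo 0 1) {k j : n}
    (h : mix t (hα.1.eigenvalues j) (hβ.1.eigenvalues k) = 0) : hα.1.eigenvalues j = 0 :=
  by_contra fun hj => mix_ne_zero_of_ne_zero_left (Set.Ioo_subset_Ioc_self ht)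
    (hα.eigenvalues_nonneg j) (hβ.eigenvalues_nonneg k) hj h

lemma sum_mix_mul_normSq_eigenCoords_sub (ht : t ∈ Set.Ioo 0 1) (Z : Matrix n n ℂ) :
    ∑ p : n × n, mix t (hα.1.eigenvalues p.2) (hβ.1.eigenvalues p.1) *
        ‖eigenCoords hβ.1 hα.1 Z p.1 p.2 - (hα.1.eigenvalues p.2 /
          mix t (hα.1.eigenvalues p.2) (hβ.1.eigenvalues p.1) : ℝ) *
            eigenCoords hβ.1 hα.1 1 p.1 p.2‖ ^ 2 =
      quantumSkewChi hβ.1 hα.1 t - (Zᴴ * ((2 : ℝ) • α - mixMul t α β Z)).trace.re := by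
  rw [← sum_star_eigenCoords_mul hβ.1 hα.1, Complex.re_sum, quantumSkewChi,
    ← Finset.sum_sub_distrib]
  refine Finset.sum_congr rfl fun p _ => ?_
  rw [mix_mul_normSq_sub (eigenvalues_eq_zero_of_mix_eq_zero hβ hα ht), eigenCoords_sub,
    eigenCoords_smul, Matrix.sub_apply, Matrix.smul_apply, eigenCoords_mixMul, Complex.real_smul,
    eigenCoords_self]
  push_cast
  rfl

lemma trace_mul_sub_mixMul_le_quantumSkewChi (ht : t ∈ Set.Ioo 0 1) (Z : Matrix n n ℂ) :
    (Zᴴ * ((2 : ℝ) • α - mixMul t α β Z)).trace.re ≤ quantumSkewChi hβ.1 hα.1 t := by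
  rw [← sub_nonneg, ← sum_mix_mul_normSq_eigenCoords_sub hβ hα ht]
  exact Finset.sum_nonneg fun p _ => mul_nonneg (mix_eigenvalues_nonneg hβ hα ht _ _) (sq_nonneg _)

lemma mixMul_eq_of_trace_eq_quantumSkewChi (ht : t ∈ Set.Ioo 0 1) {Z : Matrix n n ℂ}
    (heq : (Zᴴ * ((2 : ℝ) • α - mixMul t α β Z)).trace.re = quantumSkewChi hβ.1 hα.1 t) :
    mixMul t α β Z = α := by
  have hsquares := sum_mix_mul_normSq_eigenCoords_sub hβ hα ht Z
  rw [heq, sub_self, Finset.sum_eq_zero_iff_of_nonneg fun p _ =>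
    mul_nonneg (mix_eigenvalues_nonneg hβ hα ht _ _) (sq_nonneg _)] at hsquares
  refine eigenCoords_injective hβ.1 hα.1 (ext fun k j => ?_)
  rw [eigenCoords_mixMul, eigenCoords_self]
  rcases mul_eq_zero.1 (hsquares (k, j) (Finset.mem_univ _)) with hmix | hsq
  · rw [hmix, eigenvalues_eq_zero_of_mix_eq_zero hβ hα ht hmix, Complex.ofReal_zero, zero_mul,
      zero_mul]
  · rw [sq_eq_zero_iff, norm_eq_zero, sub_eq_zero] at hsq
    rw [hsq, ← mul_assoc, ← Complex.ofReal_mul, mul_div_cancel_of_imp'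
      (eigenvalues_eq_zero_of_mix_eq_zero hβ hα ht)]

end PosSemidef

/-- Umegaki's relative entropy `D(α‖β)` in nats. As `log 0 = 0` here, it has its usual meaning only
when `ker β ≤ ker α`. -/
def quantumRelEntropy (α β : Matrix n n ℂ) : ℝ :=
  (α * (cfc Real.log α - cfc Real.log β)).trace.re

lemma mul_cfc_log (hα : α.IsHermitian) :
    α * cfc Real.log α = cfc (fun x => x * Real.log x) α := by
  rw [cfc_mul (fun x => x) Real.log α (finite_real_spectrum.continuousOn _)
    (finite_real_spectrum.continuousOn _), cfc_id' ℝ α hα.isSelfAdjoint]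

lemma quantumRelEntropy_eq_sum :
    quantumRelEntropy α β = ∑ p : n × n, ‖eigenCoords hβ hα 1 p.1 p.2‖ ^ 2 *
      (hα.eigenvalues p.2 * (Real.log (hα.eigenvalues p.2) - Real.log (hβ.eigenvalues p.1))) := by
  have hself := sum_normSq_eigenCoords_one_mul hβ hα (fun x => x * Real.log x) 1
  have hcross := sum_normSq_eigenCoords_one_mul hβ hα (fun x => x) Real.log
  simp only [Pi.one_apply, one_mul] at hself
  rw [Pi.one_def, cfc_const_one ℝ β hβ.isSelfAdjoint, one_mul] at hself
  rw [cfc_id' ℝ α hα.isSelfAdjoint] at hcross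
  rw [quantumRelEntropy, mul_sub, mul_cfc_log hα, trace_sub, trace_mul_comm α, Complex.sub_re,
    ← hself, ← hcross, ← Finset.sum_sub_distrib]
  exact Finset.sum_congr rfl fun p _ => by ring

lemma sum_normSq_eigenCoords_one_mul_eigenvalues :
    ∑ p : n × n, ‖eigenCoords hβ hα 1 p.1 p.2‖ ^ 2 * hα.eigenvalues p.2 = α.trace.re := by
  have h := sum_normSq_eigenCoords_one_mul hβ hα (fun x => x) 1
  simp only [Pi.one_apply, one_mul] at h
  rwa [Pi.one_def, cfc_const_one ℝ β hβ.isSelfAdjoint, one_mul, cfc_id' ℝ α hα.isSelfAdjoint] at h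

lemma isAbsContFamily_eigenvalues (hβ : β.PosSemidef) (hα : α.PosSemidef)
    (hker : ∀ v, β *ᵥ v = 0 → α *ᵥ v = 0) :
    IsAbsContFamily (fun p : n × n => ‖eigenCoords hβ.1 hα.1 1 p.1 p.2‖ ^ 2)
      (fun p => hα.1.eigenvalues p.2) (fun p => hβ.1.eigenvalues p.1) where
  left_nonneg p := hα.eigenvalues_nonneg p.2
  right_nonneg p := hβ.eigenvalues_nonneg p.1
  left_eq_zero p hw hp := by
    have h := eigenCoords_mul_right hβ.1 hα.1 1 p.1 p.2
    rw [one_mul, eigenCoords_apply_of_ker hβ.1 hα.1 hker hp, eq_comm, mul_eq_zero,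
      Complex.ofReal_eq_zero] at h
    exact h.resolve_right fun h0 => hw (by simp [h0])

section Diagonal

variable {q : n → ℝ}

/-- The diagonal matrix at which `Z ↦ Zᴴ * (2 • α - mixMul t α β Z)` has the largest trace among
diagonal matrices, when `α` has diagonal `i ↦ q i * β i i`. -/
def diagonalRatio {n : Type*} [DecidableEq n] (t : ℝ) (q : n → ℝ) : Matrix n n ℂ :=
  diagonal fun i => ((q i / mix t (q i) 1 : ℝ) : ℂ)

lemma trace_diagonalRatio_mul_sub_mixMul (hq : ∀ i, 0 ≤ q i) (hdiag : ∀ i, α i i = q i * β i i)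
    {t : ℝ} (ht : t ∈ Set.Ioo 0 1) :
    ((diagonalRatio t q)ᴴ * ((2 : ℝ) • α - mixMul t α β (diagonalRatio t q))).trace.re =
      ∑ i, (β i i).re * skewChi t (q i) 1 := by
  rw [trace, Complex.re_sum]
  refine Finset.sum_congr rfl fun i _ => ?_
  have hmix := mix_one_ne_zero ht (hq i)
  rw [diag_apply, diagonalRatio, diagonal_conjTranspose, diagonal_mul]
  simp only [mixMul, Matrix.sub_apply, Matrix.add_apply, Matrix.smul_apply, mul_diagonal,
    diagonal_mul, hdiag i, Complex.real_smul, Pi.star_apply, Complex.star_def,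
    Complex.conj_ofReal, Complex.re_ofReal_mul, Complex.sub_re, Complex.add_re,
    Complex.re_mul_ofReal, skewChi]
  field_simp
  rw [mix]
  ring

lemma mul_diagonal_eq_of_mixMul_diagonalRatio_eq (hq : ∀ i, 0 ≤ q i)
    (h : ∀ t ∈ Set.Ioo (0 : ℝ) 1, mixMul t α β (diagonalRatio t q) = α) :
    β * diagonal (fun i => (q i : ℂ)) = α := by
  ext i j
  have hentry {t : ℝ} (ht : t ∈ Set.Ioo 0 1) :
      β i j * q j * (1 - t + t * q i) = α i j * (1 - t + t * q j) := by
    have hi : (mix t (q i) 1 : ℂ) ≠ 0 := Complex.ofReal_ne_zero.2 (mix_one_ne_zero ht (hq i))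
    have hj : (mix t (q j) 1 : ℂ) ≠ 0 := Complex.ofReal_ne_zero.2 (mix_one_ne_zero ht (hq j))
    have hij := congrFun (congrFun (h t ht) i) j
    simp only [mixMul, diagonalRatio, Matrix.add_apply, Matrix.smul_apply, mul_diagonal,
      diagonal_mul, Complex.real_smul, Complex.ofReal_div] at hij
    field_simp at hij
    simp only [mix, mul_one] at hij
    push_cast at hij
    have ht1 : (1 - t : ℂ) ≠ 0 := sub_ne_zero.2 (mod_cast ht.2.ne')
    exact mul_left_cancel₀ ht1 (by linear_combination hij)
  -- The identity is affine in `t`: extrapolate from two interior values to `t = 0`.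
  have hthird := hentry (t := 1 / 3) (by norm_num)
  have htwoThirds := hentry (t := 2 / 3) (by norm_num)
  rw [mul_diagonal]
  push_cast at hthird htwoThirds
  linear_combination 2 * hthird - htwoThirds

lemma sum_diag_mul_skewChi_le_quantumSkewChi (hβ : β.PosSemidef) (hα : α.PosSemidef)
    (hq : ∀ i, 0 ≤ q i) (hdiag : ∀ i, α i i = q i * β i i) {t : ℝ} (ht : t ∈ Set.Ioo 0 1) :
    ∑ i, (β i i).re * skewChi t (q i) 1 ≤ quantumSkewChi hβ.1 hα.1 t :=
  trace_diagonalRatio_mul_sub_mixMul hq hdiag ht ▸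
    trace_mul_sub_mixMul_le_quantumSkewChi hβ hα ht (diagonalRatio t q)

lemma sum_normSq_mul_eigenvalues_eq_sum_diag_mul (hβ : β.IsHermitian) (hα : α.IsHermitian)
    (hdiag : ∀ i, α i i = q i * β i i) :
    ∑ p : n × n, ‖eigenCoords hβ hα 1 p.1 p.2‖ ^ 2 * hα.eigenvalues p.2 =
      ∑ i, (β i i).re * q i := by
  rw [sum_normSq_eigenCoords_one_mul_eigenvalues, trace, Complex.re_sum]
  exact Finset.sum_congr rfl fun i _ => by
    rw [diag_apply, hdiag, Complex.re_ofReal_mul, mul_comm]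

theorem sum_diag_mul_log_le_quantumRelEntropy (hβ : β.PosSemidef) (hα : α.PosSemidef)
    (hker : ∀ v, β *ᵥ v = 0 → α *ᵥ v = 0) (hq : ∀ i, 0 ≤ q i)
    (hdiag : ∀ i, α i i = q i * β i i) :
    ∑ i, (β i i).re * (q i * Real.log (q i)) ≤ quantumRelEntropy α β := by
  have h := sum_mul_log_sub_log_le_of_skewChi_le (isAbsContFamily_eigenvalues hβ hα hker)
    (isAbsContFamily_one _ hq) (sum_normSq_mul_eigenvalues_eq_sum_diag_mul hβ.1 hα.1 hdiag)
    fun t ht => sum_diag_mul_skewChi_le_quantumSkewChi hβ hα hq hdiag ht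
  simpa only [quantumRelEntropy_eq_sum hβ.1 hα.1, Real.log_one, sub_zero] using h

theorem mul_diagonal_eq_of_quantumRelEntropy_eq (hβ : β.PosSemidef) (hα : α.PosSemidef)
    (hker : ∀ v, β *ᵥ v = 0 → α *ᵥ v = 0) (hq : ∀ i, 0 ≤ q i)
    (hdiag : ∀ i, α i i = q i * β i i)
    (heq : ∑ i, (β i i).re * (q i * Real.log (q i)) = quantumRelEntropy α β) :
    β * diagonal (fun i => (q i : ℂ)) = α := by
  refine mul_diagonal_eq_of_mixMul_diagonalRatio_eq hq fun t ht =>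
    mixMul_eq_of_trace_eq_quantumSkewChi hβ hα ht ?_
  rw [trace_diagonalRatio_mul_sub_mixMul hq hdiag ht]
  refine sum_skewChi_eq_of_sum_mul_log_sub_log_eq (isAbsContFamily_eigenvalues hβ hα hker)
    (isAbsContFamily_one _ hq) (sum_normSq_mul_eigenvalues_eq_sum_diag_mul hβ.1 hα.1 hdiag)
    (fun t ht => sum_diag_mul_skewChi_le_quantumSkewChi hβ hα hq hdiag ht) ?_ ht
  simpa only [quantumRelEntropy_eq_sum hβ.1 hα.1, Real.log_one, sub_zero] using heq

end Diagonal

end RelativeEntropy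

section ClassicalQuantum

lemma shannonEntropy_mul_log_two {ι : Type*} [Fintype ι] (p : ι → ℝ) :
    shannonEntropy p * Real.log 2 = -∑ i, p i * Real.log (p i) := by
  rw [shannonEntropy, neg_mul, Finset.sum_mul]
  refine congrArg Neg.neg (Finset.sum_congr rfl fun i _ => ?_)
  rw [mul_assoc, ← Real.log_div_log, div_mul_cancel₀ _ (Real.log_pos one_lt_two).ne']
variable {n X : Type*} [Fintype n]

lemma mulVec_eq_zero_of_sum_mulVec_eq_zero [Fintype X] {σ : X → Matrix n n ℂ}
    (hσ : ∀ x, (σ x).PosSemidef) {v : n → ℂ} (hv : (∑ x, σ x) *ᵥ v = 0) (x : X) : σ x *ᵥ v = 0 := by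
  rw [← (hσ x).dotProduct_mulVec_zero_iff]
  have hsum : ∑ x, star v ⬝ᵥ σ x *ᵥ v = 0 := by
    rw [← dotProduct_sum, ← sum_mulVec, hv, dotProduct_zero]
  exact (Finset.sum_eq_zero_iff_of_nonneg fun x _ => (hσ x).dotProduct_mulVec_nonneg v).1 hsum x
    (Finset.mem_univ x)

variable [DecidableEq n]

lemma trace_cfc_eq_sum_eigenvalues {A : Matrix n n ℂ} (hA : A.IsHermitian) (f : ℝ → ℝ) :
    (cfc f A).trace = ∑ i, (f (hA.eigenvalues i) : ℂ) := by
  rw [hA.cfc_eq, IsHermitian.cfc, Unitary.conjStarAlgAut_apply, trace_mul_comm, ← mul_assoc,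
    Unitary.coe_star_mul_self, one_mul, trace_diagonal]
  rfl

lemma vonNeumannEntropy_mul_log_two {A : Matrix n n ℂ} (hA : A.IsHermitian) :
    vonNeumannEntropy A * Real.log 2 = -(A * cfc Real.log A).trace.re := by
  rw [vonNeumannEntropy, dif_pos hA, shannonEntropy_mul_log_two, mul_cfc_log hA,
    trace_cfc_eq_sum_eigenvalues hA, ← Complex.ofReal_sum, Complex.ofReal_re]

lemma sum_eigenvalues_eq_sum_roots_charpoly {A : Matrix n n ℂ} (hA : A.IsHermitian) (f : ℝ → ℝ) :
    ∑ i, f (hA.eigenvalues i) = (A.charpoly.roots.map fun z => f z.re).sum := by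
  simp [hA.roots_charpoly_eq_eigenvalues]

variable [Fintype X]

lemma charpoly_blockDiagonal {R : Type*} [CommRing R] [DecidableEq X] (σ : X → Matrix n n R) :
    (blockDiagonal σ).charpoly = ∏ x, (σ x).charpoly := by
  have hchar : (blockDiagonal σ).charmatrix = blockDiagonal fun x => (σ x).charmatrix := by
    ext ⟨i, x⟩ ⟨j, y⟩ : 2
    by_cases hxy : x = y <;>
      simp [charmatrix_apply, blockDiagonal_apply, diagonal_apply, hxy]
  simp only [charpoly, hchar, det_blockDiagonal]

lemma vonNeumannEntropy_blockDiagonal [DecidableEq X] {σ : X → Matrix n n ℂ}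
    (hσ : ∀ x, (σ x).IsHermitian) :
    vonNeumannEntropy (blockDiagonal σ) = ∑ x, vonNeumannEntropy (σ x) := by
  have hroots : (∏ x, (σ x).charpoly).roots = Finset.univ.val.bind fun x => (σ x).charpoly.roots :=
    Polynomial.roots_prod _ _ (Finset.prod_ne_zero_iff.2 fun x _ => (charpoly_monic _).ne_zero)
  simp only [vonNeumannEntropy, dif_pos (isHermitian_blockDiagonal_iff.2 hσ), dif_pos (hσ _),
    shannonEntropy]
  simp only [sum_eigenvalues_eq_sum_roots_charpoly _ fun x => x * Real.logb 2 x]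
  rw [charpoly_blockDiagonal, hroots, Multiset.map_bind, Multiset.sum_bind,
    Finset.sum_neg_distrib]
  rfl

lemma sum_quantumRelEntropy_sum [DecidableEq X] {σ : X → Matrix n n ℂ}
    (hσ : ∀ x, (σ x).IsHermitian) :
    ∑ x, quantumRelEntropy (σ x) (∑ x, σ x) =
      (vonNeumannEntropy (∑ x, σ x) - vonNeumannEntropy (blockDiagonal σ)) * Real.log 2 := by
  have hsum : (∑ x, σ x).IsHermitian := isSelfAdjoint_sum _ fun x _ => hσ x
  rw [vonNeumannEntropy_blockDiagonal hσ, sub_mul, Finset.sum_mul,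
    vonNeumannEntropy_mul_log_two hsum]
  simp only [vonNeumannEntropy_mul_log_two (hσ _), quantumRelEntropy, mul_sub, trace_sub,
    Complex.sub_re, Finset.sum_sub_distrib, Finset.sum_mul, trace_sum, Complex.re_sum,
    Finset.sum_neg_distrib]
  ring

theorem sum_mul_diagonal_eq_of_vonNeumannEntropy_sub_eq [DecidableEq X] {σ : X → Matrix n n ℂ}
    (hσ : ∀ x, (σ x).PosSemidef) {q : X → n → ℝ} (hq : ∀ x i, 0 ≤ q x i)
    (hdiag : ∀ x i, σ x i i = q x i * (∑ x, σ x) i i)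
    (hentropy : (vonNeumannEntropy (∑ x, σ x) - vonNeumannEntropy (blockDiagonal σ)) * Real.log 2 =
      ∑ x, ∑ i, ((∑ x, σ x) i i).re * (q x i * Real.log (q x i))) (x : X) :
    (∑ x, σ x) * diagonal (fun i => (q x i : ℂ)) = σ x := by
  have hsum : (∑ x, σ x).PosSemidef := posSemidef_sum _ fun x _ => hσ x
  have hker (x : X) (v : n → ℂ) (hv : (∑ x, σ x) *ᵥ v = 0) : σ x *ᵥ v = 0 :=
    mulVec_eq_zero_of_sum_mulVec_eq_zero hσ hv x
  rw [← sum_quantumRelEntropy_sum fun x => (hσ x).1, eq_comm, Finset.sum_eq_sum_iff_of_le fun x _ =>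
    sum_diag_mul_log_le_quantumRelEntropy hsum (hσ x) (hker x) (hq x) (hdiag x)] at hentropy
  exact mul_diagonal_eq_of_quantumRelEntropy_eq hsum (hσ x) (hker x) (hq x) (hdiag x)
    (hentropy x (Finset.mem_univ x))

end ClassicalQuantum

section Classical

variable {X Y : Type*} {P : X × Y → ℝ}

lemma condYX_eq_of_row_proportional [Fintype Y] {x x' : X} {c c' : ℝ} (hc : c ≠ 0) (hc' : c' ≠ 0)
    (h : ∀ y, P (x', y) * c = P (x, y) * c') : condYX P x' = condYX P x := by
  funext y
  have hmarg : margX P x' * c = margX P x * c' := by simp only [margX, Finset.sum_mul, h]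
  rw [condYX, condYX, ← mul_div_mul_right _ _ hc, h, hmarg, mul_div_mul_right _ _ hc']

section FintypeLeft

variable [Fintype X]

/-- The posterior `P_{X|Y=y}(x)`, read as `0` when `P_Y(y) = 0`. -/
def condXY (P : X × Y → ℝ) (x : X) (y : Y) : ℝ := P (x, y) / margY P y

lemma le_margY (hP0 : ∀ p, 0 ≤ P p) (x : X) (y : Y) : P (x, y) ≤ margY P y :=
  Finset.single_le_sum (f := fun x => P (x, y)) (fun x _ => hP0 (x, y)) (Finset.mem_univ x)

lemma margY_mul_condXY (hP0 : ∀ p, 0 ≤ P p) (x : X) (y : Y) :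
    margY P y * condXY P x y = P (x, y) :=
  mul_div_cancel_of_imp' fun hy => le_antisymm (hy ▸ le_margY hP0 x y) (hP0 (x, y))

lemma condXY_nonneg (hP0 : ∀ p, 0 ≤ P p) (x : X) (y : Y) : 0 ≤ condXY P x y :=
  div_nonneg (hP0 (x, y)) (Finset.sum_nonneg fun x _ => hP0 (x, y))

lemma mul_eq_mul_of_condXY_eq (hP0 : ∀ p, 0 ≤ P p)
    (hcond : ∀ x y y', 0 < P (x, y) → 0 < P (x, y') → ∀ x', condXY P x' y = condXY P x' y')
    {x x' : X} {y : Y} (hx : 0 < P (x, y)) (hx' : 0 < P (x', y)) (y' : Y) :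
    P (x', y') * P (x, y) = P (x, y') * P (x', y) := by
  have hshared (h : ∀ z, condXY P z y = condXY P z y') :
      P (x', y') * P (x, y) = P (x, y') * P (x', y) := by
    rw [← margY_mul_condXY hP0 x y, ← margY_mul_condXY hP0 x' y, ← margY_mul_condXY hP0 x y',
      ← margY_mul_condXY hP0 x' y', h, h]
    ring
  rcases (hP0 (x, y')).eq_or_lt with h | h
  · rcases (hP0 (x', y')).eq_or_lt with h' | h'
    · rw [← h, ← h', zero_mul, zero_mul]
    · exact hshared (hcond x' y y' hx' h')
  · exact hshared (hcond x y y' hx h)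

end FintypeLeft

variable [Fintype X] [Fintype Y]

lemma shannonEntropy_margY_sub_mul_log_two (hP0 : ∀ p, 0 ≤ P p) :
    (shannonEntropy (margY P) - shannonEntropy P) * Real.log 2 =
      ∑ x, ∑ y, margY P y * (condXY P x y * Real.log (condXY P x y)) := by
  have hmarg : ∑ y, margY P y * Real.log (margY P y) =
      ∑ x, ∑ y, P (x, y) * Real.log (margY P y) := by
    rw [Finset.sum_comm]
    simp only [← Finset.sum_mul]
    rfl
  rw [sub_mul, shannonEntropy_mul_log_two, shannonEntropy_mul_log_two, hmarg,
    Fintype.sum_prod_type, neg_sub_neg, ← Finset.sum_sub_distrib]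
  refine Finset.sum_congr rfl fun x _ => ?_
  rw [← Finset.sum_sub_distrib]
  refine Finset.sum_congr rfl fun y _ => ?_
  rw [← mul_assoc, margY_mul_condXY hP0, ← mul_sub]
  rcases (hP0 (x, y)).eq_or_lt with h | h
  · rw [← h, zero_mul, zero_mul]
  · rw [condXY, Real.log_div h.ne' (h.trans_le (le_margY hP0 x y)).ne']

lemma depCondEntropyX_eq_zero (hP0 : ∀ p, 0 ≤ P p)
    (h : ∀ x x' y, 0 < P (x, y) → 0 < P (x', y) → condYX P x' = condYX P x) :
    depCondEntropyX P = 0 := by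
  rw [depCondEntropyX, neg_eq_zero]
  refine Finset.sum_eq_zero fun ⟨x, y⟩ _ => ?_
  rcases (hP0 (x, y)).eq_or_lt with hxy | hxy
  · rw [← hxy, zero_mul]
  · have hfiber : ∑ x' with condYX P x' = condYX P x, P (x', y) = margY P y :=
      Finset.sum_subset (Finset.filter_subset _ _) fun x' _ hx' =>
        ((hP0 (x', y)).eq_of_not_lt fun hpos => hx' (Finset.mem_filter.2
          ⟨Finset.mem_univ _, h x x' y hxy hpos⟩)).symm
    rw [hfiber, div_self (hxy.trans_le (le_margY hP0 x y)).ne', Real.logb_one, mul_zero]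

theorem depCondEntropyX_eq_zero_of_condXY_eq (hP0 : ∀ p, 0 ≤ P p)
    (hcond : ∀ x y y', 0 < P (x, y) → 0 < P (x, y') → ∀ x', condXY P x' y = condXY P x' y') :
    depCondEntropyX P = 0 :=
  depCondEntropyX_eq_zero hP0 fun _ _ _ hx hx' =>
    condYX_eq_of_row_proportional hx.ne' hx'.ne' (mul_eq_mul_of_condXY_eq hP0 hcond hx hx')

end Classical

section Embedding

lemma exists_sum_mul_star_ne_zero {A B : Type*} [Fintype A] [Fintype B] {u v : A × B → ℂ}
    (hu : u ≠ 0) (huv : trRight (outer u) = trRight (outer v)) :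
    ∃ b b', ∑ a, u (a, b) * star (v (a, b')) ≠ 0 := by
  by_contra! h
  let U : Matrix A B ℂ := of fun a b => u (a, b)
  let V : Matrix A B ℂ := of fun a b => v (a, b)
  have hUV : U * Uᴴ = V * Vᴴ := huv
  have hVU : Vᴴ * U = 0 := by
    ext b' b
    exact (Finset.sum_congr rfl fun a _ => mul_comm _ _).trans (h b b')
  have hsq : (U * Uᴴ)ᴴ * (U * Uᴴ) = 0 :=
    calc (U * Uᴴ)ᴴ * (U * Uᴴ) = V * Vᴴ * (U * Uᴴ) := by
          rw [(isHermitian_mul_conjTranspose_self U).eq, hUV]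
      _ = V * (Vᴴ * U) * Uᴴ := by simp only [Matrix.mul_assoc]
      _ = 0 := by rw [hVU, Matrix.mul_zero, Matrix.zero_mul]
  have hU : U = 0 := self_mul_conjTranspose_eq_zero.1 (conjTranspose_mul_self_eq_zero.1 hsq)
  exact hu (funext fun i => congrFun (congrFun hU i.1) i.2)

variable {X Y : Type*} {dA dB : ℕ} {P : X × Y → ℝ} {φ : X → Y → Fin dA × Fin dB → ℂ}

lemma blockX_posSemidef [Finite Y] (x : X) : (blockX P φ x).PosSemidef := by
  let B : Matrix (Y × Fin dB) (Fin dA) ℂ :=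
    of fun p a => (Real.sqrt (P (x, p.1)) : ℂ) * φ x p.1 (a, p.2)
  have hB : blockX P φ x = B * Bᴴ := rfl
  exact hB ▸ posSemidef_self_mul_conjTranspose B

lemma blockX_apply (x : X) (p q : Y × Fin dB) :
    blockX P φ x p q = Real.sqrt (P (x, p.1)) * Real.sqrt (P (x, q.1)) *
      ∑ a, φ x p.1 (a, p.2) * star (φ x q.1 (a, q.2)) := by
  simp only [blockX, Finset.mul_sum, map_mul, Complex.conj_ofReal, ← starRingEnd_apply]
  exact Finset.sum_congr rfl fun a _ => by ring

lemma blockX_self (hP0 : ∀ p, 0 ≤ P p) (x : X) (y : Y) (b : Fin dB) :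
    blockX P φ x (y, b) (y, b) = P (x, y) * trLeft (outer (φ x y)) b b := by
  rw [blockX_apply, ← Complex.ofReal_mul, Real.mul_self_sqrt (hP0 _)]
  rfl

lemma exists_blockX_ne_zero {x : X} {y y' : Y} (hy : 0 < P (x, y)) (hy' : 0 < P (x, y'))
    (hφ : φ x y ≠ 0) (hcorrA : trRight (outer (φ x y)) = trRight (outer (φ x y'))) :
    ∃ b b', blockX P φ x (y, b) (y', b') ≠ 0 := by
  obtain ⟨b, b', hne⟩ := exists_sum_mul_star_ne_zero hφ hcorrA
  refine ⟨b, b', ?_⟩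
  rw [blockX_apply, ← Complex.ofReal_mul]
  exact mul_ne_zero (Complex.ofReal_ne_zero.2
    (mul_pos (Real.sqrt_pos.2 hy) (Real.sqrt_pos.2 hy')).ne') hne

lemma trace_trLeft_outer {A B : Type*} [Fintype A] [Fintype B] (u : A × B → ℂ) :
    (trLeft (outer u)).trace = ∑ v, (‖u v‖ : ℂ) ^ 2 := by
  simp only [trace, diag_apply, trLeft, outer, Complex.mul_conj', Fintype.sum_prod_type_right]

variable [Fintype X]

lemma blockX_self_eq_condXY_mul (hP0 : ∀ p, 0 ≤ P p)
    (hcorrB : ∀ x x' y, 0 < P (x, y) → 0 < P (x', y) →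
      trLeft (outer (φ x y)) = trLeft (outer (φ x' y))) (x : X) (i : Y × Fin dB) :
    blockX P φ x i i = condXY P x i.1 * (∑ x, blockX P φ x) i i := by
  obtain ⟨y, b⟩ := i
  rw [Matrix.sum_apply]
  simp only [blockX_self hP0]
  rcases (hP0 (x, y)).eq_or_lt with hxy | hxy
  · simp [condXY, ← hxy]
  have hsum : ∑ x', (P (x', y) : ℂ) * trLeft (outer (φ x' y)) b b =
      margY P y * trLeft (outer (φ x y)) b b := by
    rw [margY, Complex.ofReal_sum, Finset.sum_mul]
    refine Finset.sum_congr rfl fun x' _ => ?_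
    rcases (hP0 (x', y)).eq_or_lt with hxy' | hxy'
    · rw [← hxy', Complex.ofReal_zero, zero_mul, zero_mul]
    · rw [hcorrB x' x y hxy' hxy]
  rw [hsum, ← margY_mul_condXY hP0]
  push_cast
  ring

lemma sum_blockX_self_re (hP0 : ∀ p, 0 ≤ P p)
    (hunit : ∀ x y, 0 < P (x, y) → ∑ v, ‖φ x y v‖ ^ 2 = 1) (y : Y) :
    ∑ b, ((∑ x, blockX P φ x) (y, b) (y, b)).re = margY P y := by
  simp only [Matrix.sum_apply, ← Complex.re_sum]
  rw [Finset.sum_comm]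
  simp only [blockX_self hP0, ← Finset.mul_sum]
  have hmass (x : X) : (P (x, y) : ℂ) * ∑ b, trLeft (outer (φ x y)) b b = P (x, y) := by
    rcases (hP0 (x, y)).eq_or_lt with hxy | hxy
    · rw [← hxy, Complex.ofReal_zero, zero_mul]
    · have htrace : ∑ b, trLeft (outer (φ x y)) b b = 1 :=
        (trace_trLeft_outer (φ x y)).trans (mod_cast hunit x y hxy)
      rw [htrace, mul_one]
  simp only [hmass, ← Complex.ofReal_sum, Complex.ofReal_re]
  rfl

variable [Fintype Y] [DecidableEq X] [DecidableEq Y]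

lemma vonNeumannEntropy_sub_mul_log_two_of_SXBB_eq (hP0 : ∀ p, 0 ≤ P p)
    (hunit : ∀ x y, 0 < P (x, y) → ∑ v, ‖φ x y v‖ ^ 2 = 1) (hNoLeak : SXBB P φ = mutualInfo P) :
    (vonNeumannEntropy (∑ x, blockX P φ x) -
        vonNeumannEntropy (blockDiagonal (blockX P φ))) * Real.log 2 =
      ∑ x, ∑ i : Y × Fin dB, ((∑ x, blockX P φ x) i i).re *
        (condXY P x i.1 * Real.log (condXY P x i.1)) := by
  have hentropy : vonNeumannEntropy (∑ x, blockX P φ x) -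
      vonNeumannEntropy (blockDiagonal (blockX P φ)) =
        shannonEntropy (margY P) - shannonEntropy P := by
    rw [SXBB, mutualInfo] at hNoLeak
    linarith
  rw [hentropy, shannonEntropy_margY_sub_mul_log_two hP0]
  simp only [Fintype.sum_prod_type, ← Finset.sum_mul, sum_blockX_self_re hP0 hunit]

lemma sum_blockX_mul_condXY (hP0 : ∀ p, 0 ≤ P p)
    (hunit : ∀ x y, 0 < P (x, y) → ∑ v, ‖φ x y v‖ ^ 2 = 1)
    (hcorrB : ∀ x x' y, 0 < P (x, y) → 0 < P (x', y) →
      trLeft (outer (φ x y)) = trLeft (outer (φ x' y)))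
    (hNoLeak : SXBB P φ = mutualInfo P) (x : X) (i j : Y × Fin dB) :
    (∑ x, blockX P φ x) i j * condXY P x j.1 = blockX P φ x i j := by
  rw [← sum_mul_diagonal_eq_of_vonNeumannEntropy_sub_eq blockX_posSemidef
    (fun x i => condXY_nonneg hP0 x i.1) (fun x i => blockX_self_eq_condXY_mul hP0 hcorrB x i)
    (vonNeumannEntropy_sub_mul_log_two_of_SXBB_eq hP0 hunit hNoLeak) x, mul_diagonal]

end Embedding

/-- if some embedding of `P` has zero leakage, i.e.
`S(X;BB')_ψ = I(X;Y)`, then `P` is trivial: `H(X↘Y | Y) = 0`. -/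
theorem zero_leakage_implies_trivial {dA dB : ℕ}
    (P : 𝒳 × 𝒴 → ℝ) (hP0 : ∀ p, 0 ≤ P p) (hP1 : ∑ p, P p = 1)
    (φ : 𝒳 → 𝒴 → Fin dA × Fin dB → ℂ)
    (hunit : ∀ x y, 0 < P (x, y) → ∑ v, ‖φ x y v‖ ^ 2 = 1)
    (hcorrA : ∀ x y y', 0 < P (x, y) → 0 < P (x, y') →
      trRight (outer (φ x y)) = trRight (outer (φ x y')))
    (hcorrB : ∀ x x' y, 0 < P (x, y) → 0 < P (x', y) →
      trLeft (outer (φ x y)) = trLeft (outer (φ x' y)))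
    (hNoLeak : SXBB P φ = mutualInfo P) :
    depCondEntropyX P = 0 := by
  have hρ : (∑ x, blockX P φ x).IsHermitian :=
    isSelfAdjoint_sum _ fun x _ => (blockX_posSemidef x).1
  have hright (x) (i j : 𝒴 × Fin dB) :
      (∑ x, blockX P φ x) i j * condXY P x j.1 = blockX P φ x i j :=
    sum_blockX_mul_condXY hP0 hunit hcorrB hNoLeak x i j
  have hleft (x) (i j : 𝒴 × Fin dB) :
      (∑ x, blockX P φ x) i j * condXY P x i.1 = blockX P φ x i j := by
    rw [← hρ.apply, ← (blockX_posSemidef x).1.apply, ← hright, star_mul', Complex.star_def,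
      Complex.conj_ofReal]
  refine depCondEntropyX_eq_zero_of_condXY_eq hP0 fun x y y' hy hy' x' => ?_
  have hφ : φ x y ≠ 0 := fun h0 => by simpa [h0] using hunit x y hy
  obtain ⟨b, b', hne⟩ := exists_blockX_ne_zero hy hy' hφ (hcorrA x y y' hy hy')
  have hρ_ne : (∑ x, blockX P φ x) (y, b) (y', b') ≠ 0 := left_ne_zero_of_mul (hright x _ _ ▸ hne)
  exact Complex.ofReal_injective (mul_left_cancel₀ hρ_ne
    ((hleft x' (y, b) (y', b')).trans (hright x' (y, b) (y', b')).symm))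

end
end

section
/- Let 0 ≤ p < 1/2 − 1/(2√2) and let P^{OT_p} be the pmf on {0,1}² × {0,1}² defined by P((x₀,x₁),(c,y)) = (1−p)/8 if y = x_c and p/8 otherwise (randomized 1-out-of-2 oblivious transfer of bits where the selected bit passes through a binary symmetric channel with error rate p). Then every regular embedding of P^{OT_p} has leakage at least (1/2 − p − √(p(1−p)))² / (32·ln 2). -/
open scoped BigOperators
open Matrix
open scoped ComplexOrder

noncomputable section

variable {𝒳 𝒴 : Type*} [Fintype 𝒳] [Fintype 𝒴] [DecidableEq 𝒳] [DecidableEq 𝒴]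

/-- The regular embedding `|ψ_θ⟩ = Σ_{x,y} e^{iθ(x,y)} √P(x,y) |x⟩⊗|y⟩` of `P`. -/
def regEmbed (P : 𝒳 × 𝒴 → ℝ) (θ : 𝒳 × 𝒴 → ℝ) : 𝒳 × 𝒴 → ℂ :=
  fun p => Complex.exp ((θ p : ℂ) * Complex.I) * (Real.sqrt (P p) : ℂ)

/-- The leakage `Δ(ψ_θ) = S(tr_A |ψ_θ⟩⟨ψ_θ|) − I(X;Y)` of a regular embedding. -/
def regLeakage (P : 𝒳 × 𝒴 → ℝ) (θ : 𝒳 × 𝒴 → ℝ) : ℝ :=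
  vonNeumannEntropy (trLeft (outer (regEmbed P θ))) - mutualInfo P

/-- The leakage of the primitive `P`: minimal leakage over regular embeddings. -/
def primLeakage (P : 𝒳 × 𝒴 → ℝ) : ℝ := ⨅ θ : 𝒳 × 𝒴 → ℝ, regLeakage P θ


/-- The randomized noisy 1-out-of-2 OT primitive `P^{OT_p}` on `{0,1}² × {0,1}²`:
`P((x₀,x₁),(c,y)) = (1−p)/8` if `y = x_c` and `p/8` otherwise. -/
def PotNoisy (p : ℝ) : (Bool × Bool) × (Bool × Bool) → ℝ := fun q =>
  if q.2.2 = (if q.2.1 then q.1.2 else q.1.1) then (1 - p) / 8 else p / 8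

/-!
The collision entropy `-log₂ tr ρ²` bounds the von Neumann entropy from below, and by the triangle
inequality the purity `tr ρ²` of the reduced state is largest when all phases vanish. With
`d = 1 - 2p` and `u = 2√(p(1-p)) = √(1 - d²)` this phase-free purity is `(3 + 2u + 3u²)/8`, while
`I(X;Y) = 1 - h(p)`, so `ln 2` times the leakage is at least the gap
`ln 2 · h(p) - ln 2 - ln ((3 + 2u + 3u²)/8)`. At `d = 0` the terms of order `d²` of the gap cancel
and a multiple of `d⁴` is left. Truncating the power series of the entropy and of the logarithm
shows that the gap is at least `d⁴/32` for all `|d| ≤ 1`, which exceeds the claimed bound.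
-/

/-! ### Entropy and purity -/

section Purity

variable {n : Type*} [Fintype n]

theorem shannonEntropy_eq_sum_negMulLog_div_log_two (p : n → ℝ) :
    shannonEntropy p = (∑ x, Real.negMulLog (p x)) / Real.log 2 := by
  simp only [shannonEntropy, Real.logb, Real.negMulLog, neg_mul, Finset.sum_neg_distrib,
    mul_div_assoc', ← Finset.sum_div, neg_div]

theorem shannonEntropy_uniform :
    shannonEntropy (fun _ : n => 1 / (Fintype.card n : ℝ)) = Real.logb 2 (Fintype.card n) := by
  rcases isEmpty_or_nonempty n with _ | _
  · simp [shannonEntropy]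
  · simp [shannonEntropy, Real.logb_inv, Finset.card_univ]

theorem tangent_le_negMulLog {x t : ℝ} (hx : 0 ≤ x) (ht : 0 < t) :
    (1 - Real.log t) * x - x ^ 2 / t ≤ Real.negMulLog x := by
  rcases hx.eq_or_lt with rfl | hx
  · simp
  · have h_log := Real.log_le_sub_one_of_pos (div_pos hx ht)
    rw [Real.log_div hx.ne' ht.ne'] at h_log
    calc (1 - Real.log t) * x - x ^ 2 / t = -(x * (x / t - 1 + Real.log t)) := by ring
      _ ≤ -(x * Real.log x) := by gcongr; linarith
      _ = Real.negMulLog x := by rw [Real.negMulLog, neg_mul]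

theorem neg_logb_sum_sq_le_shannonEntropy {p : n → ℝ} (hp_nonneg : ∀ x, 0 ≤ p x)
    (hp_sum : ∑ x, p x = 1) : -Real.logb 2 (∑ x, p x ^ 2) ≤ shannonEntropy p := by
  set t := ∑ x, p x ^ 2 with ht_def
  have ht : 0 < t := by
    obtain ⟨x, -, hx⟩ := Finset.exists_ne_zero_of_sum_ne_zero (hp_sum.trans_ne one_ne_zero)
    exact Finset.sum_pos' (fun y _ => sq_nonneg (p y)) ⟨x, Finset.mem_univ x, by positivity⟩
  rw [shannonEntropy_eq_sum_negMulLog_div_log_two, Real.logb, ← neg_div]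
  gcongr
  calc -Real.log t = ∑ x, ((1 - Real.log t) * p x - p x ^ 2 / t) := by
        rw [Finset.sum_sub_distrib, ← Finset.mul_sum, ← Finset.sum_div, hp_sum, ← ht_def,
          div_self ht.ne']
        ring
    _ ≤ ∑ x, Real.negMulLog (p x) :=
        Finset.sum_le_sum fun x _ => tangent_le_negMulLog (hp_nonneg x) ht

/-- The purity `tr ρ²` of a density matrix `ρ`, as a real number. -/
def purity (ρ : Matrix n n ℂ) : ℝ := (ρ * ρ).trace.re

theorem purity_eq_sum_norm_sq {ρ : Matrix n n ℂ} (hρ : ρ.IsHermitian) :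
    purity ρ = ∑ i, ∑ j, ‖ρ i j‖ ^ 2 := by
  simp only [purity, Matrix.trace, Matrix.diag, Matrix.mul_apply, Complex.re_sum]
  refine Finset.sum_congr rfl fun i _ => Finset.sum_congr rfl fun j _ => ?_
  rw [← hρ.apply j i, Complex.star_def, Complex.mul_conj', ← Complex.ofReal_pow,
    Complex.ofReal_re]

theorem purity_pos {ρ : Matrix n n ℂ} (hρ : ρ.IsHermitian) (hρ_ne : ρ ≠ 0) : 0 < purity ρ := by
  obtain ⟨i, j, hij⟩ : ∃ i j, ρ i j ≠ 0 := by
    simpa only [ne_eq, ← Matrix.ext_iff, not_forall, Matrix.zero_apply] using hρ_ne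
  rw [purity_eq_sum_norm_sq hρ]
  calc 0 < ‖ρ i j‖ ^ 2 := by positivity
    _ ≤ ∑ j, ‖ρ i j‖ ^ 2 :=
        Finset.single_le_sum (f := fun j => ‖ρ i j‖ ^ 2) (fun _ _ => by positivity)
          (Finset.mem_univ j)
    _ ≤ ∑ i, ∑ j, ‖ρ i j‖ ^ 2 :=
        Finset.single_le_sum (f := fun i => ∑ j, ‖ρ i j‖ ^ 2) (fun _ _ => by positivity)
          (Finset.mem_univ i)

variable [DecidableEq n]

theorem purity_eq_sum_eigenvalues_sq {ρ : Matrix n n ℂ} (hρ : ρ.IsHermitian) :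
    purity ρ = ∑ i, hρ.eigenvalues i ^ 2 := by
  have h_trace : (ρ * ρ).trace = ∑ i, (hρ.eigenvalues i : ℂ) ^ 2 := by
    conv_lhs => rw [hρ.spectral_theorem]
    rw [← map_mul, Matrix.diagonal_mul_diagonal, Unitary.conjStarAlgAut_apply,
      Matrix.trace_mul_cycle]
    simp [Matrix.trace_diagonal, sq]
  rw [purity, h_trace]
  norm_cast

theorem neg_logb_purity_le_vonNeumannEntropy {ρ : Matrix n n ℂ} (hρ : ρ.PosSemidef)
    (hρ_trace : ρ.trace = 1) : -Real.logb 2 (purity ρ) ≤ vonNeumannEntropy ρ := by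
  have h_sum : ∑ i, hρ.1.eigenvalues i = 1 := by
    rw [← RCLike.ofReal_inj (K := ℂ), RCLike.ofReal_sum, ← hρ.1.trace_eq_sum_eigenvalues, hρ_trace,
      RCLike.ofReal_one]
  rw [vonNeumannEntropy, dif_pos hρ.1, purity_eq_sum_eigenvalues_sq hρ.1]
  exact neg_logb_sum_sq_le_shannonEntropy hρ.eigenvalues_nonneg h_sum

end Purity

/-! ### Regular embeddings -/

section RegularEmbedding

variable {m n : Type*}

theorem norm_regEmbed (P θ : m × n → ℝ) (q : m × n) : ‖regEmbed P θ q‖ = √(P q) := by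
  rw [regEmbed, norm_mul, Complex.norm_exp_ofReal_mul_I, one_mul, Complex.norm_real,
    Real.norm_of_nonneg (Real.sqrt_nonneg _)]

variable [Fintype m]

theorem trLeft_outer_eq_mul_conjTranspose (ψ : m × n → ℂ) :
    trLeft (outer ψ) =
      (Matrix.of fun i a => ψ (a, i)) * (Matrix.of fun (i : n) (a : m) => ψ (a, i))ᴴ := by
  ext i j
  simp [trLeft, outer, Matrix.mul_apply]

/-- The state `tr_A |ψ_θ⟩⟨ψ_θ|` that the regular embedding of `P` with phase function `θ` leaves
to the second party. -/
def reducedState (P θ : m × n → ℝ) : Matrix n n ℂ :=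
  trLeft (outer (regEmbed P θ))

theorem norm_reducedState_le (P θ : m × n → ℝ) (i j : n) :
    ‖reducedState P θ i j‖ ≤ ∑ a, √(P (a, i)) * √(P (a, j)) := by
  refine (norm_sum_le _ _).trans_eq (Finset.sum_congr rfl fun a _ => ?_)
  rw [outer, norm_mul, RCLike.norm_conj, norm_regEmbed, norm_regEmbed]

theorem reducedState_zero_apply (P : m × n → ℝ) (i j : n) :
    reducedState P 0 i j = ((∑ a, √(P (a, i)) * √(P (a, j)) : ℝ) : ℂ) := by
  simp [reducedState, trLeft, outer, regEmbed]

theorem norm_reducedState_zero (P : m × n → ℝ) (i j : n) :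
    ‖reducedState P 0 i j‖ = ∑ a, √(P (a, i)) * √(P (a, j)) := by
  rw [reducedState_zero_apply, Complex.norm_real, Real.norm_of_nonneg (by positivity)]

theorem posSemidef_reducedState [Finite n] (P θ : m × n → ℝ) : (reducedState P θ).PosSemidef := by
  rw [reducedState, trLeft_outer_eq_mul_conjTranspose]
  exact Matrix.posSemidef_self_mul_conjTranspose _

variable [Fintype n]

theorem trace_reducedState {P : m × n → ℝ} (hP : ∀ q, 0 ≤ P q) (θ : m × n → ℝ) :
    (reducedState P θ).trace = ((∑ q, P q : ℝ) : ℂ) := by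
  simp only [Matrix.trace, Matrix.diag, reducedState, trLeft, outer, Complex.mul_conj',
    norm_regEmbed, ← Complex.ofReal_pow, Real.sq_sqrt (hP _), Fintype.sum_prod_type_right]
  push_cast
  rfl

theorem purity_reducedState_zero (P : m × n → ℝ) :
    purity (reducedState P 0) = ∑ i, ∑ j, (∑ a, √(P (a, i)) * √(P (a, j))) ^ 2 := by
  simp only [purity_eq_sum_norm_sq (posSemidef_reducedState P 0).1, norm_reducedState_zero]

theorem purity_reducedState_le_zero (P θ : m × n → ℝ) :
    purity (reducedState P θ) ≤ purity (reducedState P 0) := by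
  rw [purity_eq_sum_norm_sq (posSemidef_reducedState P θ).1, purity_reducedState_zero]
  gcongr
  exact norm_reducedState_le P θ _ _

theorem neg_logb_purity_zero_le_vonNeumannEntropy [DecidableEq n] {P : m × n → ℝ}
    (hP_nonneg : ∀ q, 0 ≤ P q) (hP_sum : ∑ q, P q = 1) (θ : m × n → ℝ) :
    -Real.logb 2 (purity (reducedState P 0)) ≤ vonNeumannEntropy (reducedState P θ) := by
  have h_trace : (reducedState P θ).trace = 1 := by
    rw [trace_reducedState hP_nonneg, hP_sum, Complex.ofReal_one]
  have h_pos : 0 < purity (reducedState P θ) := by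
    refine purity_pos (posSemidef_reducedState P θ).1 fun h_zero => ?_
    simp [h_zero] at h_trace
  calc -Real.logb 2 (purity (reducedState P 0)) ≤ -Real.logb 2 (purity (reducedState P θ)) := by
        gcongr
        · exact one_lt_two
        · exact purity_reducedState_le_zero P θ
    _ ≤ vonNeumannEntropy (reducedState P θ) :=
        neg_logb_purity_le_vonNeumannEntropy (posSemidef_reducedState P θ) h_trace

end RegularEmbedding

/-! ### A lower bound for the binary entropy -/

theorem hasSum_log_two_sub_binEntropy {d : ℝ} (hd : |d| < 1) :
    HasSum (fun k : ℕ => d ^ (2 * k + 2) / ((2 * k + 1) * (2 * k + 2)))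
      (Real.log 2 - Real.binEntropy ((1 - d) / 2)) := by
  obtain ⟨hd_neg, hd_pos⟩ := abs_lt.1 hd
  have h_even := Real.hasSum_pow_div_log_of_abs_lt_one (x := d ^ 2) (by
    rw [abs_pow]; exact pow_lt_one₀ (abs_nonneg d) hd two_ne_zero)
  have h_odd := (Real.hasSum_log_sub_log_of_abs_lt_one hd).mul_left d
  have h_closed : Real.log 2 - Real.binEntropy ((1 - d) / 2) =
      1 / 2 * (d * (Real.log (1 + d) - Real.log (1 - d)) - -Real.log (1 - d ^ 2)) := by
    rw [Real.binEntropy_eq_negMulLog_add_negMulLog_one_sub, Real.negMulLog, Real.negMulLog,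
      show 1 - (1 - d) / 2 = (1 + d) / 2 by ring, show 1 - d ^ 2 = (1 + d) * (1 - d) by ring,
      Real.log_div (by linarith) two_ne_zero, Real.log_div (by linarith) two_ne_zero,
      Real.log_mul (by linarith) (by linarith)]
    ring
  rw [h_closed]
  refine ((h_odd.sub h_even).mul_left (1 / 2)).congr_fun fun k => ?_
  field_simp
  ring

theorem sum_range_one_div_le_one_ninth (N : ℕ) :
    ∑ k ∈ Finset.range N, 1 / ((2 * k + 5) * (2 * k + 6) : ℝ) ≤ 1 / 9 := by
  have h_telescope : ∀ k : ℕ, 1 / ((2 * k + 5) * (2 * k + 6) : ℝ) ≤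
      1 / (4 * k + 9) - 1 / (4 * (k + 1 : ℕ) + 9) := fun k => by
    rw [div_sub_div _ _ (by positivity) (by positivity),
      div_le_div_iff₀ (by positivity) (by positivity)]
    push_cast
    nlinarith [(k.cast_nonneg : (0 : ℝ) ≤ k)]
  calc _ ≤ ∑ k ∈ Finset.range N, (1 / (4 * k + 9) - 1 / (4 * (k + 1 : ℕ) + 9) : ℝ) :=
        Finset.sum_le_sum fun k _ => h_telescope k
    _ = 1 / 9 - 1 / (4 * N + 9) := by
        rw [Finset.sum_range_sub' fun k : ℕ => 1 / (4 * k + 9 : ℝ)]; norm_num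
    _ ≤ 1 / 9 := sub_le_self _ (by positivity)

theorem log_two_sub_le_binEntropy {d : ℝ} (hd : |d| ≤ 1) :
    Real.log 2 - d ^ 2 / 2 - d ^ 4 / 12 - d ^ 6 / 9 ≤ Real.binEntropy ((1 - d) / 2) := by
  rcases hd.lt_or_eq with hd_lt | hd_eq
  · have h_pow (k : ℕ) : d ^ (2 * (k + 2) + 2) ≤ d ^ 6 := by
      calc d ^ (2 * (k + 2) + 2) = d ^ 6 * (d ^ 2) ^ k := by ring
        _ ≤ d ^ 6 := mul_le_of_le_one_right (by positivity)
            (pow_le_one₀ (sq_nonneg d) ((sq_le_one_iff_abs_le_one d).2 hd))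
    have h_tail := (hasSum_nat_add_iff' 2).2 (hasSum_log_two_sub_binEntropy hd_lt)
    have h_le := le_of_tendsto' h_tail.tendsto_sum_nat fun N =>
      calc _ ≤ ∑ k ∈ Finset.range N, d ^ 6 * (1 / ((2 * k + 5) * (2 * k + 6))) := by
            gcongr with k
            push_cast
            rw [mul_one_div, show 2 * (k + 2 : ℝ) + 1 = 2 * k + 5 by ring,
              show 2 * (k + 2 : ℝ) + 2 = 2 * k + 6 by ring]
            exact div_le_div_of_nonneg_right (h_pow k) (by positivity)
        _ ≤ d ^ 6 * (1 / 9) := by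
            rw [← Finset.mul_sum]
            gcongr
            exact sum_range_one_div_le_one_ninth N
    norm_num [Finset.sum_range_succ] at h_le
    linarith
  · have h_log := Real.log_two_lt_d9
    rcases (abs_eq zero_le_one).1 hd_eq with rfl | rfl <;> norm_num <;> linarith

theorem add_sq_div_two_le_neg_log_one_sub {x : ℝ} (hx₀ : 0 ≤ x) (hx₁ : x < 1) :
    x + x ^ 2 / 2 ≤ -Real.log (1 - x) := by
  have h_sum := sum_le_hasSum (Finset.range 2) (fun k _ => by positivity)
    (Real.hasSum_pow_div_log_of_abs_lt_one (abs_lt.2 ⟨by linarith, hx₁⟩))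
  norm_num [Finset.sum_range_succ] at h_sum
  exact h_sum

-- With `d² = 1 - u²` and the phase-free purity `1 - x`, the left side is the truncated series of
-- `log 2 - binEntropy` plus the gap `d⁴/32`, and the right side is `x + x²/2`.
theorem entropy_polynomial_le_log_polynomial {u : ℝ} (hu : 0 ≤ u) :
    (1 - u ^ 2) / 2 + (1 - u ^ 2) ^ 2 / 12 + (1 - u ^ 2) ^ 3 / 9 + (1 - u ^ 2) ^ 2 / 32 ≤
      (5 - 2 * u - 3 * u ^ 2) / 8 + ((5 - 2 * u - 3 * u ^ 2) / 8) ^ 2 / 2 := by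
  -- The difference of the two sides vanishes to second order at `u = 1`.
  have h_cofactor : 0 ≤ 128 * u ^ 4 + 256 * u ^ 3 - 51 * u ^ 2 - 250 * u + 109 := by
    nlinarith [mul_nonneg hu (sq_nonneg (u - 1 / 2)), sq_nonneg (u ^ 2 - u / 2)]
  linear_combination (1 - u) ^ 2 / 1152 * h_cofactor

/-! ### Noisy oblivious transfer -/

theorem PotNoisy_nonneg {p : ℝ} (hp₀ : 0 ≤ p) (hp₁ : p ≤ 1)
    (q : (Bool × Bool) × (Bool × Bool)) : 0 ≤ PotNoisy p q := by
  unfold PotNoisy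
  split_ifs <;> linarith

theorem margX_PotNoisy (p : ℝ) : margX (PotNoisy p) = fun _ => 1 / 4 := by
  ext ⟨x₀, x₁⟩
  cases x₀ <;> cases x₁ <;> simp [margX, PotNoisy, Fintype.sum_prod_type] <;> ring

theorem margY_PotNoisy (p : ℝ) : margY (PotNoisy p) = fun _ => 1 / 4 := by
  ext ⟨c, y⟩
  cases c <;> cases y <;> simp [margY, PotNoisy, Fintype.sum_prod_type] <;> ring

theorem sum_PotNoisy (p : ℝ) : ∑ q, PotNoisy p q = 1 := by
  calc ∑ q, PotNoisy p q = ∑ x, margX (PotNoisy p) x := Fintype.sum_prod_type _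
    _ = 1 := by rw [margX_PotNoisy]; norm_num

theorem shannonEntropy_PotNoisy (p : ℝ) :
    shannonEntropy (PotNoisy p) = 3 + Real.binEntropy p / Real.log 2 := by
  have h_eighth : Real.negMulLog (1 / 8) = 3 / 8 * Real.log 2 := by
    rw [Real.negMulLog, show (1 / 8 : ℝ) = (2 ^ 3)⁻¹ by norm_num, Real.log_inv, Real.log_pow]
    ring
  have h_sum : ∑ q, Real.negMulLog (PotNoisy p q) =
      8 * (Real.negMulLog ((1 - p) / 8) + Real.negMulLog (p / 8)) := by
    simp only [PotNoisy, Fintype.sum_prod_type, Fintype.sum_bool, Bool.false_eq_true,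
      Bool.true_eq_false, if_true, if_false]
    ring
  have h_two : Real.log 2 ≠ 0 := (Real.log_pos one_lt_two).ne'
  rw [shannonEntropy_eq_sum_negMulLog_div_log_two, h_sum, div_eq_mul_one_div (1 - p),
    div_eq_mul_one_div p, Real.negMulLog_mul, Real.negMulLog_mul, h_eighth,
    Real.binEntropy_eq_negMulLog_add_negMulLog_one_sub]
  field_simp
  ring

theorem mutualInfo_PotNoisy (p : ℝ) :
    mutualInfo (PotNoisy p) = 1 - Real.binEntropy p / Real.log 2 := by
  have h_logb : Real.logb 2 4 = 2 := by
    rw [show (4 : ℝ) = 2 ^ (2 : ℝ) by norm_num, Real.logb_rpow two_pos one_lt_two.ne']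
  have h_uniform : shannonEntropy (fun _ : Bool × Bool => (1 / 4 : ℝ)) = 2 := by
    simpa [h_logb] using shannonEntropy_uniform (n := Bool × Bool)
  rw [mutualInfo, margX_PotNoisy, margY_PotNoisy, h_uniform, shannonEntropy_PotNoisy]
  ring

theorem purity_reducedState_zero_PotNoisy {p : ℝ} (hp₀ : 0 ≤ p) (hp₁ : p ≤ 1) :
    purity (reducedState (PotNoisy p) 0) =
      (3 + 4 * √(p * (1 - p)) + 12 * √(p * (1 - p)) ^ 2) / 8 := by
  have h_pp : √(p / 8) * √(p / 8) = p / 8 := Real.mul_self_sqrt (by linarith)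
  have h_qq : √((1 - p) / 8) * √((1 - p) / 8) = (1 - p) / 8 := Real.mul_self_sqrt (by linarith)
  have h_pq : √(p / 8) * √((1 - p) / 8) = √(p * (1 - p)) / 8 := by
    rw [← Real.sqrt_mul (by linarith), show p / 8 * ((1 - p) / 8) = p * (1 - p) / 8 ^ 2 by ring,
      Real.sqrt_div' _ (by positivity), Real.sqrt_sq (by norm_num)]
  have h_qp := (mul_comm _ _).trans h_pq
  simp only [purity_reducedState_zero, PotNoisy, Fintype.sum_prod_type, Fintype.sum_bool,
    Bool.false_eq_true, Bool.true_eq_false, if_true, if_false, h_pp, h_qq, h_pq, h_qp]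
  ring

theorem pow_four_div_le_binEntropy_sub_log_purity {p : ℝ} (hp₀ : 0 ≤ p) (hp₁ : p ≤ 1) :
    (1 - 2 * p) ^ 4 / 32 ≤ Real.binEntropy p - Real.log 2 -
      Real.log (purity (reducedState (PotNoisy p) 0)) := by
  set s := √(p * (1 - p)) with hs
  have hs₀ : 0 ≤ s := Real.sqrt_nonneg _
  have hs_sq : s ^ 2 = p * (1 - p) := Real.sq_sqrt (mul_nonneg hp₀ (by linarith))
  have hs₁ : 2 * s ≤ 1 := by nlinarith [sq_nonneg (1 - 2 * p)]
  have h_sq : (1 - 2 * p) ^ 2 = 1 - (2 * s) ^ 2 := by linear_combination 4 * hs_sq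
  have h_entropy := log_two_sub_le_binEntropy (d := 1 - 2 * p) (abs_le.2 ⟨by linarith, by linarith⟩)
  rw [show (1 - (1 - 2 * p)) / 2 = p by ring, show (1 - 2 * p) ^ 4 = ((1 - 2 * p) ^ 2) ^ 2 by ring,
    show (1 - 2 * p) ^ 6 = ((1 - 2 * p) ^ 2) ^ 3 by ring, h_sq] at h_entropy
  have h_log := add_sq_div_two_le_neg_log_one_sub
    (x := (5 - 2 * (2 * s) - 3 * (2 * s) ^ 2) / 8) (by nlinarith) (by nlinarith)
  have h_gap := entropy_polynomial_le_log_polynomial (u := 2 * s) (by linarith)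
  rw [purity_reducedState_zero_PotNoisy hp₀ hp₁, ← hs,
    show (3 + 4 * s + 12 * s ^ 2) / 8 = 1 - (5 - 2 * (2 * s) - 3 * (2 * s) ^ 2) / 8 by ring,
    show (1 - 2 * p) ^ 4 = ((1 - 2 * p) ^ 2) ^ 2 by ring, h_sq]
  linarith

theorem noisy_ot_leakage_general {p : ℝ} (hp₀ : 0 ≤ p) (hp₁ : p ≤ 1)
    (θ : (Bool × Bool) × (Bool × Bool) → ℝ) :
    (1 - 2 * p) ^ 4 / (32 * Real.log 2) ≤ regLeakage (PotNoisy p) θ := by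
  calc (1 - 2 * p) ^ 4 / (32 * Real.log 2) = (1 - 2 * p) ^ 4 / 32 / Real.log 2 :=
        div_mul_eq_div_div _ _ _
    _ ≤ (Real.binEntropy p - Real.log 2 - Real.log (purity (reducedState (PotNoisy p) 0))) /
          Real.log 2 := by
        gcongr
        exact pow_four_div_le_binEntropy_sub_log_purity hp₀ hp₁
    _ = -Real.logb 2 (purity (reducedState (PotNoisy p) 0)) - mutualInfo (PotNoisy p) := by
        rw [mutualInfo_PotNoisy, Real.logb]
        field_simp
        ring
    _ ≤ regLeakage (PotNoisy p) θ :=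
        sub_le_sub_right (neg_logb_purity_zero_le_vonNeumannEntropy
          (PotNoisy_nonneg hp₀ hp₁) (sum_PotNoisy p) θ) _

theorem sq_half_sub_sqrt_le_pow_four {p : ℝ} (hp : p ≤ 1 / 2 - 1 / (2 * √2)) :
    (1 / 2 - p - √(p * (1 - p))) ^ 2 ≤ (1 - 2 * p) ^ 4 := by
  have h_inv_sq : (1 / (2 * √2)) ^ 2 = 1 / 8 := by norm_num [div_pow, mul_pow]
  have h_inv_pos : 0 < 1 / (2 * √2) := by positivity
  have h_far : 1 / 8 ≤ (1 / 2 - p) ^ 2 := h_inv_sq ▸ by gcongr; linarith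
  have h_sqrt : √(p * (1 - p)) ≤ 1 / 2 - p := Real.sqrt_le_iff.2 ⟨by linarith, by linarith⟩
  calc (1 / 2 - p - √(p * (1 - p))) ^ 2 ≤ (1 / 2 - p) ^ 2 :=
        pow_le_pow_left₀ (sub_nonneg.2 h_sqrt) (sub_le_self _ (Real.sqrt_nonneg _)) 2
    _ ≤ 16 * (1 / 2 - p) ^ 2 * (1 / 2 - p) ^ 2 :=
        le_mul_of_one_le_left (sq_nonneg _) (by linarith)
    _ = (1 - 2 * p) ^ 4 := by ring

/-- for `0 ≤ p < 1/2 − 1/(2√2)`, every regular embedding of `P^{OT_p}`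
has leakage at least `(1/2 − p − √(p(1−p)))² / (32 ln 2)`. -/
theorem noisy_ot_leakage (p : ℝ) (hp0 : 0 ≤ p)
    (hp : p < 1 / 2 - 1 / (2 * Real.sqrt 2)) :
    ∀ θ : (Bool × Bool) × (Bool × Bool) → ℝ,
      (1 / 2 - p - Real.sqrt (p * (1 - p))) ^ 2 / (32 * Real.log 2) ≤
        regLeakage (PotNoisy p) θ := fun θ =>
  have hp1 : p ≤ 1 := hp.le.trans ((sub_le_self _ (by positivity)).trans (by norm_num))
  (div_le_div_of_nonneg_right (sq_half_sub_sqrt_le_pow_four hp.le) (by positivity)).trans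
    (noisy_ot_leakage_general hp0 hp1 θ)

end
end
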